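/- (Compositional concurrent commutativity, part (iii), order reversal.) Let C be a category satisfying the stated assumptions, let r1 = (O1 ←o1— K1 —i1→ I1) and r2 = (O2 ←o2— K2 —i2→ I2) be linear rules, and assume μ21 = (I2 ← M21 → O1) is a DPO-admissible match of r2 into r1, with associated pushout N21 (induced morphisms n2 : I2 → N21, n1 : O1 → N21), pushout complements K̄2 (for (i2, n2)) and K̄1 (for (o1, n1)), and assume there exist monomorphisms u : O1 → K̄2 and v : I2 → K̄1 such that (K̄2 → N21) ∘ u = n1 and (K̄1 → N21) ∘ v = n2. Let a1 : M21 → K1 and a2 : M21 → K2 be the monomorphisms obtained from the pullbacks of (v : I2 → K̄1, K1 → K̄1) and (u : O1 → K̄2, K2 → K̄2), respectively, and let μ12 := (I1 ←(i1 ∘ a1)— M21 —(o2 ∘ a2)→ O2), which is a DPO-admissible match of r1 into r2. Then the composite rules r2 ▷[μ21] r1 and r1 ▷[μ12] r2 are isomorphic as spans. -/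

import Mathlib

open CategoryTheory CategoryTheory.Limits

universe v u

/-- The ambient category possesses an epi-mono factorization. -/
def HasEpiMonoFact (𝒞 : Type u) [Category.{v} 𝒞] : Prop :=
  ∀ {X Y : 𝒞} (f : X ⟶ Y), ∃ (Z : 𝒞) (e : X ⟶ Z) (m : Z ⟶ Y),
    Epi e ∧ Mono m ∧ e ≫ m = f

/-- The ambient category is finitary: every object has only finitely many subobjects. -/
def Finitary (𝒞 : Type u) [Category.{v} 𝒞] : Prop :=
  ∀ X : 𝒞, Finite (Subobject X)

/-- A linear rule: a span `O ⟵o— K —i⟶ I` of monomorphisms. -/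
structure Rule (𝒞 : Type u) [Category.{v} 𝒞] where
  O : 𝒞
  K : 𝒞
  I : 𝒞
  o : K ⟶ O
  i : K ⟶ I
  mono_o : Mono o
  mono_i : Mono i

/-- The data of a DPO direct derivation applying the linear rule `(O ⟵o— K —i⟶ I)`
to an object `X` along the match `m : I ⟶ X`: a pushout complement `(D, k, d)` for
`(i, m)` together with the pushout `Y` of `(o, k)`, with comatch `ms : O ⟶ Y`. -/
structure DerivData {𝒞 : Type u} [Category.{v} 𝒞] {O K I X : 𝒞}
    (o : K ⟶ O) (i : K ⟶ I) (m : I ⟶ X) where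
  D : 𝒞
  k : K ⟶ D
  d : D ⟶ X
  poc : IsPushout i k m d
  Y : 𝒞
  ms : O ⟶ Y
  ds : D ⟶ Y
  po : IsPushout o k ms ds

/-- The data witnessing that the span `μ21 = (I2 ⟵p2— M —p1⟶ O1)` of monomorphisms
is a DPO-admissible match of the rule `r2` into the rule `r1`, together with the
construction of the DPO composite rule `r2 ▷[μ21] r1`: the pushout `N` of `μ21`, a
pushout complement `K2b` for `(r2.i, n2)` with pushout `O21` of `(r2.o, k2)`, a
pushout complement `K1b` for `(r1.o, n1)` with pushout `I21` of `(r1.i, k1)`, and the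
pullback `K21` of `(w2, w1)`; the composite rule is the span of monomorphisms
`O21 ⟵ K21 ⟶ I21` with legs `q2 ≫ v2` and `q1 ≫ v1`. -/
structure CompData {𝒞 : Type u} [Category.{v} 𝒞] (r2 r1 : Rule 𝒞)
    (M : 𝒞) (p2 : M ⟶ r2.I) (p1 : M ⟶ r1.O) where
  mono_p2 : Mono p2
  mono_p1 : Mono p1
  N : 𝒞
  n2 : r2.I ⟶ N
  n1 : r1.O ⟶ N
  poN : IsPushout p2 p1 n2 n1
  mono_n2 : Mono n2
  mono_n1 : Mono n1
  K2b : 𝒞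
  k2 : r2.K ⟶ K2b
  w2 : K2b ⟶ N
  poc2 : IsPushout r2.i k2 n2 w2
  O21 : 𝒞
  c2 : r2.O ⟶ O21
  v2 : K2b ⟶ O21
  poO : IsPushout r2.o k2 c2 v2
  K1b : 𝒞
  k1 : r1.K ⟶ K1b
  w1 : K1b ⟶ N
  poc1 : IsPushout r1.o k1 n1 w1
  I21 : 𝒞
  c1 : r1.I ⟶ I21
  v1 : K1b ⟶ I21
  poI : IsPushout r1.i k1 c1 v1
  K21 : 𝒞
  q2 : K21 ⟶ K2b
  q1 : K21 ⟶ K1b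
  pbK : IsPullback q2 q1 w2 w1
  mono_oleg : Mono (q2 ≫ v2)
  mono_ileg : Mono (q1 ≫ v1)

/-- The DPO composite rule `r2 ▷[μ21] r1` extracted from composition data. -/
def CompData.rule {𝒞 : Type u} [Category.{v} 𝒞] {r2 r1 : Rule 𝒞}
    {M : 𝒞} {p2 : M ⟶ r2.I} {p1 : M ⟶ r1.O}
    (cd : CompData r2 r1 M p2 p1) : Rule 𝒞 :=
  ⟨cd.O21, cd.K21, cd.I21, cd.q2 ≫ cd.v2, cd.q1 ≫ cd.v1, cd.mono_oleg, cd.mono_ileg⟩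

/-- Two linear rules are isomorphic as spans. -/
def RuleIso {𝒞 : Type u} [Category.{v} 𝒞] (r r' : Rule 𝒞) : Prop :=
  ∃ (φO : r.O ≅ r'.O) (φK : r.K ≅ r'.K) (φI : r.I ≅ r'.I),
    r.o ≫ φO.hom = φK.hom ≫ r'.o ∧ r.i ≫ φI.hom = φK.hom ≫ r'.i

/-!
The hypotheses on `u` and `v` say that the match `I₂ ⟵ M ⟶ O₁` factors through `K₂` and `K₁`. By the
van Kampen property the pushout complements are then themselves pushouts over `M`, and the composite
rule is `O₂ +_M O₁ ⟵ K₂ +_M K₁ ⟶ I₂ +_M I₁`, which does not depend on the order of the two rules.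
Conversely, every rule of this form is such a composite: push `K₂ +_M K₁` out along one leg of each
rule and paste the resulting grid of squares.
-/

section Pushouts

variable {𝒞 : Type u} [Category.{v} 𝒞]

lemma comp_eq_of_factorsThru {M A B K N D : 𝒞}
    {p : M ⟶ A} {q : M ⟶ B} {h : A ⟶ N} {i : B ⟶ N} [Mono h] (hN : CommSq p q h i)
    {l : K ⟶ A} {k : K ⟶ D} {w : D ⟶ N} (hD : CommSq l k h w)
    {j : B ⟶ D} (hj : j ≫ w = i) {a : M ⟶ K} (ha : CommSq q a j k) : a ≫ l = p := by
  rw [← cancel_mono h, Category.assoc, hD.w, ← reassoc_of% ha.w, hj, hN.w]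

lemma isPushout_of_isPullback_of_factorsThru {M A B N A' D : 𝒞}
    {p : M ⟶ A} {q : M ⟶ B} {h : A ⟶ N} {i : B ⟶ N} {H : IsPushout p q h i}
    (hH : H.IsVanKampen) {w : D ⟶ N} [Mono w] {s : A' ⟶ A} {t : A' ⟶ D}
    (hA' : IsPullback s t h w) {j : B ⟶ D} (hj : j ≫ w = i)
    {a : M ⟶ A'} (ha : a ≫ s = p) : IsPushout a q t j := by
  have : Mono s := hA'.mono_fst_of_mono
  have comm : a ≫ t = q ≫ j := by
    rw [← cancel_mono w, Category.assoc, Category.assoc, hj, ← hA'.w, reassoc_of% ha, H.w]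
  exact (hH a q t j (𝟙 M) s (𝟙 B) w (.of_vert_isIso_mono ⟨by simpa using ha⟩)
    (.of_vert_isIso ⟨by simp⟩) ⟨hA'.w.symm⟩ ⟨by simpa using hj⟩ ⟨comm⟩).2
    ⟨hA'.flip, .of_vert_isIso_mono ⟨by simpa using hj⟩⟩

lemma exists_isPushout_of_isPushout_comp {M A B A' B' P Q R : 𝒞}
    {a : M ⟶ A} {b : M ⟶ B} {f : A ⟶ A'} {g : B ⟶ B'} {x : A ⟶ P} {y : B ⟶ P}
    {x' : A' ⟶ Q} {y' : B' ⟶ Q} {e : P ⟶ Q} {z : B' ⟶ R} {q : P ⟶ R}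
    (hP : IsPushout a b x y) (hQ : IsPushout (a ≫ f) (b ≫ g) x' y')
    (hR : IsPushout g y z q) (hx : f ≫ x' = x ≫ e) (hy : g ≫ y' = y ≫ e) :
    ∃ d : R ⟶ Q, q ≫ d = e ∧ IsPushout f (x ≫ q) x' d := by
  obtain ⟨d, hzd, hqd⟩ := hR.exists_desc y' e hy
  rw [← hzd] at hQ
  exact ⟨d, hqd, hQ.of_left (by rw [Category.assoc, hqd, hx]) (hP.paste_vert hR.flip)⟩

end Pushouts

section Amalgamation

variable {𝒞 : Type u} [Category.{v} 𝒞]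

attribute [instance] Rule.mono_o Rule.mono_i

/-- A morphism of linear rules: a morphism of the underlying spans. -/
structure RuleHom (r t : Rule 𝒞) where
  O : r.O ⟶ t.O
  K : r.K ⟶ t.K
  I : r.I ⟶ t.I
  comm_o : r.o ≫ O = K ≫ t.o
  comm_i : r.i ≫ I = K ≫ t.i

/-- `Amalgamation r s t a b` exhibits `t` as the amalgamation of the rules `r` and `s` over their
common part `M`: the componentwise pushout, along `a` and `b`, of `r` and `s` over the identity span
on `M`. -/
structure Amalgamation (r s t : Rule 𝒞) {M : 𝒞} (a : M ⟶ r.K) (b : M ⟶ s.K) where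
  inl : RuleHom r t
  inr : RuleHom s t
  isPushout_O : IsPushout (a ≫ r.o) (b ≫ s.o) inl.O inr.O
  isPushout_K : IsPushout a b inl.K inr.K
  isPushout_I : IsPushout (a ≫ r.i) (b ≫ s.i) inl.I inr.I

namespace Amalgamation

variable {r s t : Rule 𝒞} {M : 𝒞} {a : M ⟶ r.K} {b : M ⟶ s.K}

/-- The amalgamation with the roles of the two rules exchanged. -/
def flip (A : Amalgamation r s t a b) : Amalgamation s r t b a where
  inl := A.inr
  inr := A.inl
  isPushout_O := A.isPushout_O.flip
  isPushout_K := A.isPushout_K.flip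
  isPushout_I := A.isPushout_I.flip

theorem exists_compData [Adhesive 𝒞] [Mono a] [Mono b] (A : Amalgamation r s t a b) :
    ∃ c : CompData r s M (a ≫ r.i) (b ≫ s.o), RuleIso c.rule t := by
  have hP₂ := IsPushout.of_hasPushout s.o A.inr.K
  have hP₁ := IsPushout.of_hasPushout r.i A.inl.K
  have : Mono (pushout.inr s.o A.inr.K) := Adhesive.mono_of_isPushout_of_mono_left hP₂
  have hN := IsPushout.of_hasPushout (pushout.inr s.o A.inr.K) (pushout.inr r.i A.inl.K)
  have hN₂ := hP₁.paste_vert hN.flip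
  have hN₁ := hP₂.paste_vert hN
  have hM := (A.isPushout_K.paste_vert hP₂.flip).paste_horiz hN₂
  obtain ⟨d₂, hd₂, hO⟩ := exists_isPushout_of_isPushout_comp A.isPushout_K A.isPushout_O hP₂
    A.inl.comm_o A.inr.comm_o
  obtain ⟨d₁, hd₁, hI⟩ := exists_isPushout_of_isPushout_comp A.isPushout_K.flip
    A.isPushout_I.flip hP₁ A.inr.comm_i A.inl.comm_i
  exact ⟨{
    mono_p2 := inferInstance
    mono_p1 := inferInstance
    poN := hM
    mono_n2 := Adhesive.mono_of_isPushout_of_mono_right hM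
    mono_n1 := Adhesive.mono_of_isPushout_of_mono_left hM
    poc2 := hN₂
    poO := hO
    poc1 := hN₁
    poI := hI
    pbK := Adhesive.isPullback_of_isPushout_of_mono_left hN
    mono_oleg := hd₂ ▸ t.mono_o
    mono_ileg := hd₁ ▸ t.mono_i
    .. }, .refl _, .refl _, .refl _, by simp [CompData.rule, hd₂], by simp [CompData.rule, hd₁]⟩

end Amalgamation

end Amalgamation

namespace CompData

variable {𝒞 : Type u} [Category.{v} 𝒞] {r₂ r₁ : Rule 𝒞} {M : 𝒞} {p₂ : M ⟶ r₂.I} {p₁ : M ⟶ r₁.O}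

/-- The inclusion of `r₂` into the composite rule, where `v` embeds `I₂` into the pushout
complement of `r₁`. -/
noncomputable def inl (c : CompData r₂ r₁ M p₂ p₁) (v : r₂.I ⟶ c.K1b) (hv : v ≫ c.w1 = c.n2) :
    RuleHom r₂ c.rule where
  O := c.c2
  K := c.pbK.lift c.k2 (r₂.i ≫ v) (by rw [Category.assoc, hv, c.poc2.w])
  I := v ≫ c.v1
  comm_o := by simp [rule, c.poO.w]
  comm_i := by simp [rule]

/-- The inclusion of `r₁` into the composite rule, where `u` embeds `O₁` into the pushout
complement of `r₂`. -/
noncomputable def inr (c : CompData r₂ r₁ M p₂ p₁) (u : r₁.O ⟶ c.K2b) (hu : u ≫ c.w2 = c.n1) :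
    RuleHom r₁ c.rule where
  O := u ≫ c.v2
  K := c.pbK.lift (r₁.o ≫ u) c.k1 (by rw [Category.assoc, hu, c.poc1.w])
  I := c.c1
  comm_o := by simp [rule]
  comm_i := by simp [rule, c.poI.w]

variable [Adhesive 𝒞] (c : CompData r₂ r₁ M p₂ p₁)
  {u : r₁.O ⟶ c.K2b} {v : r₂.I ⟶ c.K1b} {a₂ : M ⟶ r₂.K} {a₁ : M ⟶ r₁.K}

instance mono_w2 : Mono c.w2 := Adhesive.mono_of_isPushout_of_mono_left c.poc2

instance mono_w1 : Mono c.w1 := Adhesive.mono_of_isPushout_of_mono_left c.poc1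

lemma isPushout_K2b (hu : u ≫ c.w2 = c.n1) (ha₂ : a₂ ≫ r₂.i = p₂) :
    IsPushout a₂ p₁ c.k2 u :=
  have := c.mono_p2
  isPushout_of_isPullback_of_factorsThru (Adhesive.van_kampen c.poN)
    (Adhesive.isPullback_of_isPushout_of_mono_left c.poc2) hu ha₂

lemma isPushout_K1b (hv : v ≫ c.w1 = c.n2) (ha₁ : a₁ ≫ r₁.o = p₁) :
    IsPushout a₁ p₂ c.k1 v :=
  have := c.mono_p1
  isPushout_of_isPullback_of_factorsThru (Adhesive.van_kampen c.poN.flip)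
    (Adhesive.isPullback_of_isPushout_of_mono_left c.poc1) hv ha₁

lemma isPushout_K21 (hu : u ≫ c.w2 = c.n1) (hv : v ≫ c.w1 = c.n2)
    (ha₂ : a₂ ≫ r₂.i = p₂) (ha₁ : a₁ ≫ r₁.o = p₁) :
    IsPushout a₂ a₁ (c.inl v hv).K (c.inr u hu).K := by
  have := c.mono_p2
  have : Mono c.q1 := c.pbK.mono_snd_of_mono
  have hK₂ : IsPullback r₂.i (c.inl v hv).K v c.q1 := by
    refine (IsPullback.of_right (h₁₂ := c.q2) (h₂₂ := c.w1) (v₁₃ := c.w2) ?_ ?_ c.pbK).flip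
    · simpa [inl, hv] using (Adhesive.isPullback_of_isPushout_of_mono_left c.poc2).flip
    · simp [inl]
  exact isPushout_of_isPullback_of_factorsThru (D := c.K21)
    (Adhesive.van_kampen (c.isPushout_K1b hv ha₁).flip) hK₂ (c.pbK.lift_snd _ _ _) ha₂

/-- The composite rule as the amalgamation of `r₂` and `r₁` over `M`, when the match factors through
`K₂` and `K₁` and the embeddings of `O₁` and `I₂` factor through the pushout complements. -/
noncomputable def amalgamation (hu : u ≫ c.w2 = c.n1) (hv : v ≫ c.w1 = c.n2)
    (ha₂ : a₂ ≫ r₂.i = p₂) (ha₁ : a₁ ≫ r₁.o = p₁) :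
    Amalgamation r₂ r₁ c.rule a₂ a₁ where
  inl := c.inl v hv
  inr := c.inr u hu
  isPushout_O := by
    rw [ha₁]
    exact ((c.isPushout_K2b hu ha₂).flip.paste_vert c.poO.flip).flip
  isPushout_K := c.isPushout_K21 hu hv ha₂ ha₁
  isPushout_I := by
    rw [ha₂]
    exact (c.isPushout_K1b hv ha₁).flip.paste_vert c.poI.flip

end CompData

theorem dpo_ccc_part_iii_order_reversal_general
    {𝒞 : Type u} [Category.{v} 𝒞] [Adhesive 𝒞]
    (r1 r2 : Rule 𝒞)
    {M21 : 𝒞} {p2 : M21 ⟶ r2.I} {p1 : M21 ⟶ r1.O}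
    (c21 : CompData r2 r1 M21 p2 p1)
    (u : r1.O ⟶ c21.K2b) (v : r2.I ⟶ c21.K1b)
    (hu : u ≫ c21.w2 = c21.n1) (hv : v ≫ c21.w1 = c21.n2)
    (a2 : M21 ⟶ r2.K) (ha2 : CommSq p1 a2 u c21.k2)
    (a1 : M21 ⟶ r1.K) (ha1 : CommSq p2 a1 v c21.k1) :
    ∃ c12 : CompData r1 r2 M21 (a1 ≫ r1.i) (a2 ≫ r2.o),
      RuleIso c12.rule c21.rule := by
  have := c21.mono_n2
  have := c21.mono_n1
  have := c21.mono_p2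
  have := c21.mono_p1
  have ha2i : a2 ≫ r2.i = p2 := comp_eq_of_factorsThru c21.poN.toCommSq c21.poc2.toCommSq hu ha2
  have ha1o : a1 ≫ r1.o = p1 := comp_eq_of_factorsThru c21.poN.flip.toCommSq
    c21.poc1.toCommSq hv ha1
  have : Mono a2 := mono_of_mono_fac ha2i
  have : Mono a1 := mono_of_mono_fac ha1o
  exact (c21.amalgamation hu hv ha2i ha1o).flip.exists_compData

/-- **Compositional concurrent commutativity, part (iii): order reversal.** In the
setting of parts (i)–(ii), with `μ12 = (I1 ⟵(a1 ≫ i1)— M21 —(a2 ≫ o2)⟶ O2)` the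
induced DPO-admissible match of `r1` into `r2`, the composite rules `r2 ▷[μ21] r1`
and `r1 ▷[μ12] r2` are isomorphic as spans. -/
theorem dpo_ccc_part_iii_order_reversal
    {𝒞 : Type u} [Category.{v} 𝒞] [Adhesive 𝒞]
    [HasInitial 𝒞] [HasStrictInitialObjects 𝒞] [InitialMonoClass 𝒞]
    (hfact : HasEpiMonoFact 𝒞) (hfin : Finitary 𝒞)
    (r1 r2 : Rule 𝒞)
    {M21 : 𝒞} {p2 : M21 ⟶ r2.I} {p1 : M21 ⟶ r1.O}
    (c21 : CompData r2 r1 M21 p2 p1)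
    (u : r1.O ⟶ c21.K2b) (v : r2.I ⟶ c21.K1b) [Mono u] [Mono v]
    (hu : u ≫ c21.w2 = c21.n1) (hv : v ≫ c21.w1 = c21.n2)
    (a2 : M21 ⟶ r2.K) [Mono a2] (ha2 : IsPullback p1 a2 u c21.k2)
    (a1 : M21 ⟶ r1.K) [Mono a1] (ha1 : IsPullback p2 a1 v c21.k1) :
    ∃ c12 : CompData r1 r2 M21 (a1 ≫ r1.i) (a2 ≫ r2.o),
      RuleIso c12.rule c21.rule :=
  dpo_ccc_part_iii_order_reversal_general r1 r2 c21 u v hu hv a2 ha2.toCommSq a1 ha1.toCommSq
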